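/- arXiv:1709.00524 — 3 statements merged into one kernel-verified Lean document; each statement's English description precedes it below -/
import Mathlib

section
/- Let x be a real number and let α, ω₁, ω₂ be pairwise distinct complex numbers satisfying α+ω₁+ω₂ = x², αω₁+αω₂+ω₁ω₂ = -x, and αω₁ω₂ = 1. Set α̲ = 1 + α·i + α²·j + α³·k, ω̲₁ = 1 + ω₁·i + ω₁²·j + ω₁³·k, ω̲₂ = 1 + ω₂·i + ω₂²·j + ω₂³·k in the quaternion algebra over ℂ. Then for every natural number n, the Tribonacci quaternion polynomial (regarded in the quaternion algebra over ℂ) satisfies Q_{T,n}(x) = (α^{n+1}/((α-ω₁)(α-ω₂)))·α̲ - (ω₁^{n+1}/((α-ω₁)(ω₁-ω₂)))·ω̲₁ + (ω₂^{n+1}/((α-ω₂)(ω₁-ω₂)))·ω̲₂. -/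
/-- Tribonacci polynomials: T₀=0, T₁=1, T₂=x², Tₙ₊₃ = x²Tₙ₊₂ + xTₙ₊₁ + Tₙ. -/
def Trib (x : ℝ) : ℕ → ℝ
  | 0 => 0
  | 1 => 1
  | 2 => x ^ 2
  | n + 3 => x ^ 2 * Trib x (n + 2) + x * Trib x (n + 1) + Trib x n

/-- Tribonacci quaternion polynomials Q_{T,n}(x). -/
noncomputable def QT (x : ℝ) (n : ℕ) : Quaternion ℝ :=
  ⟨Trib x n, Trib x (n + 1), Trib x (n + 2), Trib x (n + 3)⟩

/-- Tribonacci quaternion polynomials regarded in the quaternion algebra over ℂ. -/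
noncomputable def QTC (x : ℝ) (n : ℕ) : Quaternion ℂ :=
  ⟨(Trib x n : ℂ), (Trib x (n + 1) : ℂ), (Trib x (n + 2) : ℂ), (Trib x (n + 3) : ℂ)⟩

/-- The quaternion 1 + a·i + a²·j + a³·k over ℂ. -/
def uq (a : ℂ) : Quaternion ℂ := ⟨1, a, a ^ 2, a ^ 3⟩

/-!
Reading the recurrence backwards gives `T_{-1} = 0`, so the shifted sequence `u n = T_{n-1}` starts
with `0, 0, 1`. For a recurrence of order `d` whose characteristic polynomial has `d` distinct roots
`v i`, the solution starting with `0, …, 0, 1` is `u n = ∑ i, v i ^ n / ∏ j ≠ i, (v i - v j)`: this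
is a combination of geometric solutions, and for `n < d` its value is the coefficient of
`X ^ (d - 1)` in `X ^ n`, by Lagrange interpolation of `X ^ n` at the roots. The quaternion formula
is this scalar formula in each of the four components.
-/

open Finset Polynomial

section LinearRecurrence

theorem isSolution_sum_mul_pow {R ι : Type*} [CommRing R] {E : LinearRecurrence R}
    {s : Finset ι} {v : ι → R} (hroot : ∀ i ∈ s, E.charPoly.IsRoot (v i)) (c : ι → R) :
    E.IsSolution fun n ↦ ∑ i ∈ s, c i * v i ^ n := by
  have hmem : ∑ i ∈ s, c i • (fun n ↦ v i ^ n) ∈ E.solSpace :=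
    sum_mem fun i hi ↦
      E.solSpace.smul_mem (c i) ((E.geom_sol_iff_root_charPoly (v i)).2 (hroot i hi))
  convert (E.is_sol_iff_mem_solSpace _).2 hmem using 1
  ext n
  simp

variable {F ι : Type*} [Field F] [DecidableEq ι] {s : Finset ι} {v : ι → F}

theorem sum_pow_div_prod_sub (hv : Set.InjOn v s) {k : ℕ} (hk : k < #s) :
    ∑ i ∈ s, v i ^ k / ∏ j ∈ s.erase i, (v i - v j) = if k + 1 = #s then 1 else 0 := by
  have hdegree : (X ^ k : F[X]).degree < #s := by simpa using hk
  have hcoeff := Lagrange.coeff_eq_sum hv hdegree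
  simp only [eval_pow, eval_X, coeff_X_pow] at hcoeff
  rw [← hcoeff]
  exact if_congr (by lia) rfl rfl

theorem eq_sum_pow_div_prod_sub_of_isSolution {E : LinearRecurrence F} (hs : #s = E.order)
    (hv : Set.InjOn v s) (hroot : ∀ i ∈ s, E.charPoly.IsRoot (v i))
    {u : ℕ → F} (hu : E.IsSolution u)
    (hinit : ∀ k < E.order, u k = if k + 1 = E.order then 1 else 0) (n : ℕ) :
    u n = ∑ i ∈ s, v i ^ n / ∏ j ∈ s.erase i, (v i - v j) := by
  have hsol : E.IsSolution fun n ↦ ∑ i ∈ s, v i ^ n / ∏ j ∈ s.erase i, (v i - v j) := by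
    simpa only [div_eq_inv_mul] using
      isSolution_sum_mul_pow hroot fun i ↦ (∏ j ∈ s.erase i, (v i - v j))⁻¹
  refine congrFun ((E.eq_iff_eqOn_range_order _ _ hu hsol).2 fun k hk ↦ ?_) n
  replace hk : k < E.order := by simpa using hk
  simp only [hinit k hk, sum_pow_div_prod_sub hv (hs.symm ▸ hk), hs]

end LinearRecurrence

section Tribonacci

/-- The linear recurrence `u (n + 3) = x ^ 2 * u (n + 2) + x * u (n + 1) + u n` of the Tribonacci
polynomials at `x`. -/
def tribRecurrence {R : Type*} [CommSemiring R] (x : R) : LinearRecurrence R :=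
  ⟨3, ![1, x, x ^ 2]⟩

theorem isSolution_tribRecurrence_iff {R : Type*} [CommSemiring R] {x : R} {u : ℕ → R} :
    (tribRecurrence x).IsSolution u ↔
      ∀ n, u (n + 3) = x ^ 2 * u (n + 2) + x * u (n + 1) + u n := by
  refine forall_congr' fun n ↦ ?_
  have hsum : ∑ i : Fin 3, ![1, x, x ^ 2] i * u (n + i)
      = x ^ 2 * u (n + 2) + x * u (n + 1) + u n := by
    simp [Fin.sum_univ_three]
    ring
  exact Eq.congr_right hsum

theorem charPoly_tribRecurrence {R : Type*} [CommRing R] (x : R) :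
    (tribRecurrence x).charPoly = X ^ 3 - C (x ^ 2) * X ^ 2 - C x * X - 1 := by
  have hsum : ∑ i : Fin 3, monomial i (![1, x, x ^ 2] i) = 1 + C x * X + C (x ^ 2) * X ^ 2 := by
    simp [Fin.sum_univ_three, ← C_mul_X_pow_eq_monomial]
  calc (tribRecurrence x).charPoly
      = monomial 3 1 - ∑ i : Fin 3, monomial i (![1, x, x ^ 2] i) := rfl
    _ = X ^ 3 - C (x ^ 2) * X ^ 2 - C x * X - 1 := by
      rw [hsum, monomial_one_right_eq_X_pow]
      ring

theorem charPoly_tribRecurrence_eq_prod {R : Type*} [CommRing R] {x a b c : R}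
    (hsum : a + b + c = x ^ 2) (hsum2 : a * b + a * c + b * c = -x) (hprod : a * b * c = 1) :
    (tribRecurrence x).charPoly = (X - C a) * (X - C b) * (X - C c) := by
  have hCsum := congrArg (C : R → R[X]) hsum
  have hCsum2 := congrArg (C : R → R[X]) hsum2
  have hCprod := congrArg (C : R → R[X]) hprod
  simp only [map_add, map_mul, map_neg, map_one] at hCsum hCsum2 hCprod
  rw [charPoly_tribRecurrence]
  linear_combination X ^ 2 * hCsum - X * hCsum2 + hCprod

/-- The Tribonacci polynomials at `x` with the index shifted by one, `tribPred x n = T_{n-1}(x)`,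
where `T_{-1}(x) = 0`. The shift makes the first three values `0, 0, 1`. -/
def tribPred (x : ℝ) : ℕ → ℝ
  | 0 => 0
  | n + 1 => Trib x n

theorem isSolution_tribPred (x : ℝ) :
    (tribRecurrence (x : ℂ)).IsSolution fun n ↦ (tribPred x n : ℂ) := by
  rw [isSolution_tribRecurrence_iff]
  rintro (_ | n) <;> simp [tribPred, Trib]

theorem sum_univ_three_div_prod_sub {F : Type*} [Field F] (a b c : F) (f : Fin 3 → F) :
    ∑ i, f i / ∏ j ∈ univ.erase i, (![a, b, c] i - ![a, b, c] j)
      = f 0 / ((a - b) * (a - c)) - f 1 / ((a - b) * (b - c)) + f 2 / ((a - c) * (b - c)) := by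
  have herase0 : (univ.erase 0 : Finset (Fin 3)) = {1, 2} := by decide
  have herase1 : (univ.erase 1 : Finset (Fin 3)) = {0, 2} := by decide
  have herase2 : (univ.erase 2 : Finset (Fin 3)) = {0, 1} := by decide
  have hsign1 : (b - a) * (b - c) = -((a - b) * (b - c)) := by ring
  have hsign2 : (c - a) * (c - b) = (a - c) * (b - c) := by ring
  simp [Fin.sum_univ_three, herase0, herase1, herase2, hsign1, hsign2, div_neg,
    ← sub_eq_add_neg]

theorem trib_eq_binet {x : ℝ} {α ω₁ ω₂ : ℂ}
    (hαω₁ : α ≠ ω₁) (hαω₂ : α ≠ ω₂) (hω₁ω₂ : ω₁ ≠ ω₂)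
    (hsum : α + ω₁ + ω₂ = (x : ℂ) ^ 2)
    (hsum2 : α * ω₁ + α * ω₂ + ω₁ * ω₂ = -(x : ℂ))
    (hprod : α * ω₁ * ω₂ = 1) (n : ℕ) :
    (Trib x n : ℂ)
      = α ^ (n + 1) / ((α - ω₁) * (α - ω₂))
        - ω₁ ^ (n + 1) / ((α - ω₁) * (ω₁ - ω₂))
        + ω₂ ^ (n + 1) / ((α - ω₂) * (ω₁ - ω₂)) := by
  have hv : Set.InjOn ![α, ω₁, ω₂] (univ : Finset (Fin 3)) := by
    intro i _ j _
    fin_cases i <;> fin_cases j <;> simp [hαω₁, hαω₂, hω₁ω₂, hαω₁.symm, hαω₂.symm, hω₁ω₂.symm]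
  have hroot : ∀ i ∈ (univ : Finset (Fin 3)),
      (tribRecurrence (x : ℂ)).charPoly.IsRoot (![α, ω₁, ω₂] i) := by
    rw [charPoly_tribRecurrence_eq_prod hsum hsum2 hprod]
    intro i _
    fin_cases i <;> simp
  have hinit : ∀ k < 3, (tribPred x k : ℂ) = if k + 1 = 3 then 1 else 0 := by
    intro k hk
    interval_cases k <;> simp [tribPred, Trib]
  calc (Trib x n : ℂ)
      = ∑ i, ![α, ω₁, ω₂] i ^ (n + 1) / ∏ j ∈ univ.erase i, (![α, ω₁, ω₂] i - ![α, ω₁, ω₂] j) :=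
        eq_sum_pow_div_prod_sub_of_isSolution (E := tribRecurrence (x : ℂ)) rfl hv hroot
          (isSolution_tribPred x) hinit (n + 1)
    _ = _ := sum_univ_three_div_prod_sub α ω₁ ω₂ _

theorem pow_div_smul_uq (a d : ℂ) (n : ℕ) :
    (a ^ n / d) • uq a
      = (⟨a ^ n / d, a ^ (n + 1) / d, a ^ (n + 2) / d, a ^ (n + 3) / d⟩ : Quaternion ℂ) := by
  have hpow (k : ℕ) : a ^ n / d * a ^ k = a ^ (n + k) / d := by ring
  have hmul : a ^ n / d * a = a ^ (n + 1) / d := by ring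
  exact Quaternion.ext _ _ (mul_one _) hmul (hpow 2) (hpow 3)

end Tribonacci

/-- Binet formula for the Tribonacci quaternion polynomials. -/
theorem tribonacci_quaternion_binet (x : ℝ) (α ω₁ ω₂ : ℂ)
    (hαω₁ : α ≠ ω₁) (hαω₂ : α ≠ ω₂) (hω₁ω₂ : ω₁ ≠ ω₂)
    (hsum : α + ω₁ + ω₂ = (x : ℂ) ^ 2)
    (hsum2 : α * ω₁ + α * ω₂ + ω₁ * ω₂ = -(x : ℂ))
    (hprod : α * ω₁ * ω₂ = 1) (n : ℕ) :
    QTC x n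
      = (α ^ (n + 1) / ((α - ω₁) * (α - ω₂))) • uq α
        - (ω₁ ^ (n + 1) / ((α - ω₁) * (ω₁ - ω₂))) • uq ω₁
        + (ω₂ ^ (n + 1) / ((α - ω₂) * (ω₁ - ω₂))) • uq ω₂ := by
  have htrib := trib_eq_binet hαω₁ hαω₂ hω₁ω₂ hsum hsum2 hprod
  simp only [pow_div_smul_uq]
  exact Quaternion.ext _ _ (htrib n) (htrib (n + 1)) (htrib (n + 2)) (htrib (n + 3))
end

section
/- For every real number x and every natural number n, the Tribonacci-Lucas quaternion polynomials satisfy the binomial identity ∑_{r=0}^{n} ∑_{s=0}^{r} C(n,r)·C(r,s)·x^{r+s}·Q_{t,r+s}(x) = Q_{t,3n}(x), where C(·,·) denotes the binomial coefficient. -/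
/-- Tribonacci-Lucas polynomials: t₀=3, t₁=x², t₂=x⁴+2x, tₙ₊₃ = x²tₙ₊₂ + xtₙ₊₁ + tₙ. -/
def TribL (x : ℝ) : ℕ → ℝ
  | 0 => 3
  | 1 => x ^ 2
  | 2 => x ^ 4 + 2 * x
  | n + 3 => x ^ 2 * TribL x (n + 2) + x * TribL x (n + 1) + TribL x n

/-- Tribonacci-Lucas quaternion polynomials Q_{t,n}(x). -/
noncomputable def Qt (x : ℝ) (n : ℕ) : Quaternion ℝ :=
  ⟨TribL x n, TribL x (n + 1), TribL x (n + 2), TribL x (n + 3)⟩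

/-!
If `u (m + 3) = x² u (m + 2) + x u (m + 1) + u m` for all `m`, then the shift operator `E` satisfies
`E³ u = (1 + xE(1 + xE)) u`. The two operators commute, so iterating `n` times gives
`E³ⁿ u = (1 + xE(1 + xE))ⁿ u`, and the double sum is the right-hand side expanded by the binomial
theorem, first in powers of `xE(1 + xE)` and then in powers of `xE`.
-/

open Finset

/-- The shift operator on `M`-valued sequences, as an `R`-linear endomorphism, so that linear
recurrences with coefficients in `R` become polynomial equations in it. -/
def sequenceShift (R M : Type*) [Semiring R] [AddCommMonoid M] [Module R M] :
    Module.End R (ℕ → M) :=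
  LinearMap.funLeft R M (· + 1)

section Shift

variable (R : Type*) {M : Type*} [Semiring R] [AddCommMonoid M] [Module R M]

@[simp]
theorem sequenceShift_apply (u : ℕ → M) (m : ℕ) : sequenceShift R M u m = u (m + 1) := rfl

@[simp]
theorem sequenceShift_pow_apply (k : ℕ) (u : ℕ → M) (m : ℕ) :
    (sequenceShift R M ^ k) u m = u (m + k) := by
  induction k generalizing m with
  | zero => simp
  | succ k ih => simp [pow_succ', ih, add_right_comm, add_assoc]

end Shift

theorem one_add_mul_one_add_pow {A : Type*} [Semiring A] (y : A) (n : ℕ) :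
    (1 + y * (1 + y)) ^ n =
      ∑ r ∈ range (n + 1), ∑ s ∈ range (r + 1), (n.choose r * r.choose s) • y ^ (r + s) := by
  have binomial (z : A) (k : ℕ) : (1 + z) ^ k = ∑ i ∈ range (k + 1), k.choose i • z ^ i := by
    simp [add_comm 1 z, (Commute.one_right z).add_pow, Nat.cast_comm]
  have commute_one_add : Commute y (1 + y) := (Commute.one_right y).add_right (Commute.refl y)
  simp only [binomial (y * (1 + y)), commute_one_add.mul_pow, binomial y, mul_sum, smul_sum,
    mul_smul_comm, smul_smul, pow_add]

theorem pow_apply_eq_pow_apply_of_commute {R M : Type*} [Semiring R] [AddCommMonoid M]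
    [Module R M] {f g : Module.End R M} (hfg : Commute f g) {v : M} (hv : f v = g v) (n : ℕ) :
    (f ^ n) v = (g ^ n) v := by
  rw [Module.End.pow_apply, Module.End.pow_apply]
  exact Function.Commute.iterate_eq_of_map_eq (f := f) (g := g) (LinearMap.congr_fun hfg.eq) n hv

section Recurrence

variable {R M : Type*} [CommSemiring R] [AddCommMonoid M] [Module R M] {x : R} {u : ℕ → M}

theorem sequenceShift_pow_three_apply_of_recurrence
    (hu : ∀ m, u (m + 3) = x ^ 2 • u (m + 2) + x • u (m + 1) + u m) :
    (sequenceShift R M ^ 3) u =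
      (1 + (x • sequenceShift R M) * (1 + x • sequenceShift R M)) u := by
  ext m
  simp [hu, mul_add, ← sq, smul_pow, add_comm]

theorem sequenceShift_pow_three_mul_apply_of_recurrence
    (hu : ∀ m, u (m + 3) = x ^ 2 • u (m + 2) + x • u (m + 1) + u m) (n : ℕ) :
    (sequenceShift R M ^ (3 * n)) u =
      ((1 + (x • sequenceShift R M) * (1 + x • sequenceShift R M)) ^ n) u := by
  set E := sequenceShift R M
  have commute_smul : Commute (E ^ 3) (x • E) := (Commute.pow_self E 3).smul_right x
  have commute_one_add : Commute (E ^ 3) (1 + x • E) := (Commute.one_right _).add_right commute_smul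
  have commute : Commute (E ^ 3) (1 + (x • E) * (1 + x • E)) :=
    (Commute.one_right _).add_right (commute_smul.mul_right commute_one_add)
  rw [pow_mul]
  exact pow_apply_eq_pow_apply_of_commute commute
    (sequenceShift_pow_three_apply_of_recurrence hu) n

theorem tribonacci_lucas_quaternion_binomial_sum_general
    (hu : ∀ m, u (m + 3) = x ^ 2 • u (m + 2) + x • u (m + 1) + u m) (n m : ℕ) :
    ∑ r ∈ range (n + 1), ∑ s ∈ range (r + 1),
      ((n.choose r : R) * (r.choose s : R) * x ^ (r + s)) • u (m + (r + s))
      = u (m + 3 * n) := by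
  rw [← sequenceShift_pow_apply R (3 * n) u m, sequenceShift_pow_three_mul_apply_of_recurrence hu,
    one_add_mul_one_add_pow]
  simp only [LinearMap.sum_apply, Finset.sum_apply, smul_pow, LinearMap.smul_apply, Pi.smul_apply,
    sequenceShift_pow_apply, mul_smul, Nat.cast_smul_eq_nsmul]

end Recurrence

theorem Qt_add_three (x : ℝ) (m : ℕ) :
    Qt x (m + 3) = x ^ 2 • Qt x (m + 2) + x • Qt x (m + 1) + Qt x m := by
  apply QuaternionAlgebra.ext <;> rfl

/-- ∑_{r=0}^{n} ∑_{s=0}^{r} C(n,r)·C(r,s)·x^{r+s}·Q_{t,r+s}(x) = Q_{t,3n}(x). -/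
theorem tribonacci_lucas_quaternion_binomial_sum (x : ℝ) (n : ℕ) :
    ∑ r ∈ Finset.range (n + 1), ∑ s ∈ Finset.range (r + 1),
      ((n.choose r : ℝ) * (r.choose s : ℝ) * x ^ (r + s)) • Qt x (r + s)
      = Qt x (3 * n) := by
  simpa using tribonacci_lucas_quaternion_binomial_sum_general (Qt_add_three x) n 0
end

section
/- For every real number x with x ≠ 0 and x ≠ -1, and every natural number n, the partial sums of the Tribonacci quaternion polynomials satisfy (x² + x)·∑_{l=0}^{n} Q_{T,l}(x) = Q_{T,n+2}(x) + (1 - x²)·Q_{T,n+1}(x) + Q_{T,n}(x) - ω(x), where ω(x) = 1 + i + (x² + x + 1)·j + (x⁴ + x³ + x² + x + 1)·k. -/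
/-- `ω(x) = 1 + i + (x²+x+1)j + (x⁴+x³+x²+x+1)k`. -/
def omegaQ (x : ℝ) : Quaternion ℝ := ⟨1, 1, x ^ 2 + x + 1, x ^ 4 + x ^ 3 + x ^ 2 + x + 1⟩

/-!
If `u (n + 3) = a • u (n + 2) + b • u (n + 1) + c • u n`, then
`F n = u (n + 2) + (1 - a) • u (n + 1) + (1 - a - b) • u n` satisfies
`F (n + 1) - F n = (a + b + c - 1) • u n`, so the partial sums of `u` telescope. The Tribonacci
quaternions satisfy this with `(a, b, c) = (x², x, 1)`, the recurrence being inherited componentwise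
from `Trib`, and `ω(x)` is the boundary term `F 0`.
-/

theorem smul_sum_range_of_third_order_recurrence {R M : Type*} [Ring R] [AddCommGroup M]
    [Module R M] {a b c : R} {u : ℕ → M}
    (hu : ∀ n, u (n + 3) = a • u (n + 2) + b • u (n + 1) + c • u n) (n : ℕ) :
    (a + b + c - 1) • ∑ l ∈ Finset.range n, u l
      = (u (n + 2) + (1 - a) • u (n + 1) + (1 - a - b) • u n)
        - (u 2 + (1 - a) • u 1 + (1 - a - b) • u 0) := by
  let F : ℕ → M := fun m ↦ u (m + 2) + (1 - a) • u (m + 1) + (1 - a - b) • u m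
  have smul_eq_sub (m : ℕ) : (a + b + c - 1) • u m = F (m + 1) - F m := by
    simp only [F, hu, add_smul, sub_smul, one_smul]
    abel
  calc (a + b + c - 1) • ∑ l ∈ Finset.range n, u l
      = ∑ l ∈ Finset.range n, (F (l + 1) - F l) := by simp only [Finset.smul_sum, smul_eq_sub]
    _ = F n - F 0 := Finset.sum_range_sub F n

theorem trib_add_three (x : ℝ) (n : ℕ) :
    Trib x (n + 3) = x ^ 2 * Trib x (n + 2) + x * Trib x (n + 1) + Trib x n := by
  rw [Trib]

@[simp]
theorem re_qt (x : ℝ) (n : ℕ) : (QT x n).re = Trib x n := rfl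

@[simp]
theorem imI_qt (x : ℝ) (n : ℕ) : (QT x n).imI = Trib x (n + 1) := rfl

@[simp]
theorem imJ_qt (x : ℝ) (n : ℕ) : (QT x n).imJ = Trib x (n + 2) := rfl

@[simp]
theorem imK_qt (x : ℝ) (n : ℕ) : (QT x n).imK = Trib x (n + 3) := rfl

theorem qt_add_three (x : ℝ) (n : ℕ) :
    QT x (n + 3) = x ^ 2 • QT x (n + 2) + x • QT x (n + 1) + QT x n := by
  ext <;> simp [trib_add_three]

theorem omegaQ_eq_qt (x : ℝ) :
    omegaQ x = QT x 2 + (1 - x ^ 2) • QT x 1 + (1 - x ^ 2 - x) • QT x 0 := by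
  ext <;> simp [omegaQ, Trib] <;> ring

/-- summation formula for the Tribonacci quaternion polynomials:
`(x²+x)·∑_{l=0}^{n} Q_{T,l}(x) = Q_{T,n+2}(x) + (1-x²)·Q_{T,n+1}(x) + Q_{T,n}(x) - ω(x)`. -/
theorem tribonacci_quaternion_sum (x : ℝ) (hx0 : x ≠ 0) (hx1 : x ≠ -1) (n : ℕ) :
    (x ^ 2 + x) • ∑ l ∈ Finset.range (n + 1), QT x l
      = QT x (n + 2) + (1 - x ^ 2) • QT x (n + 1) + QT x n - omegaQ x := by
  have sum_eq := smul_sum_range_of_third_order_recurrence (a := x ^ 2) (b := x) (c := (1 : ℝ))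
    (u := QT x) (fun m ↦ by rw [one_smul, qt_add_three]) (n + 1)
  rw [add_sub_cancel_right, ← omegaQ_eq_qt] at sum_eq
  calc (x ^ 2 + x) • ∑ l ∈ Finset.range (n + 1), QT x l
      = QT x (n + 3) + (1 - x ^ 2) • QT x (n + 2) + (1 - x ^ 2 - x) • QT x (n + 1)
          - omegaQ x := sum_eq
    _ = QT x (n + 2) + (1 - x ^ 2) • QT x (n + 1) + QT x n - omegaQ x := by
      rw [qt_add_three]
      module
end
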